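/- Let ε̄ ∈ int(E) be a transition point of the optimal partition, and let (X*, y*, S*) be a maximally complementary solution at ε̄. Then at least one of the following conditions fails: (i) (X*, y*, S*) is strictly complementary; (ii) X* is primal nondegenerate; (iii) (y*, S*) is dual nondegenerate. Equivalently, the Jacobian J(X*, y*, S*) is singular. -/

import Mathlib

open Matrix Set

noncomputable section

variable {n m : ℕ}

/-- Feasibility for the primal SDO problem `(P_ε)` (the feasible set does not depend on `ε`). -/
def PrimalFeasible (A : Fin m → Matrix (Fin n) (Fin n) ℝ) (b : Fin m → ℝ)
    (X : Matrix (Fin n) (Fin n) ℝ) : Prop :=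
  X.IsSymm ∧ (∀ i, ((A i) * X).trace = b i) ∧ X.PosSemidef

/-- Feasibility for the dual SDO problem `(D_ε)`. -/
def DualFeasible (C Cbar : Matrix (Fin n) (Fin n) ℝ)
    (A : Fin m → Matrix (Fin n) (Fin n) ℝ) (ε : ℝ)
    (y : Fin m → ℝ) (S : Matrix (Fin n) (Fin n) ℝ) : Prop :=
  S.IsSymm ∧ (∑ i, y i • A i) + S = C + ε • Cbar ∧ S.PosSemidef

/-- The optimal value function `v(ε)` of `(P_ε)`, with values in `EReal`. -/
def vfun (C Cbar : Matrix (Fin n) (Fin n) ℝ) (A : Fin m → Matrix (Fin n) (Fin n) ℝ)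
    (b : Fin m → ℝ) (ε : ℝ) : EReal :=
  sInf ((fun X => (((C + ε • Cbar) * X).trace : EReal)) '' {X | PrimalFeasible A b X})

/-- `E = {ε : v(ε) > -∞}`. -/
def Eset (C Cbar : Matrix (Fin n) (Fin n) ℝ) (A : Fin m → Matrix (Fin n) (Fin n) ℝ)
    (b : Fin m → ℝ) : Set ℝ :=
  {ε | ⊥ < vfun C Cbar A b ε}

/-- The primal optimal set `P*(ε)`. -/
def PrimalOpt (C Cbar : Matrix (Fin n) (Fin n) ℝ) (A : Fin m → Matrix (Fin n) (Fin n) ℝ)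
    (b : Fin m → ℝ) (ε : ℝ) : Set (Matrix (Fin n) (Fin n) ℝ) :=
  {X | PrimalFeasible A b X ∧ ∀ X', PrimalFeasible A b X' →
    ((C + ε • Cbar) * X).trace ≤ ((C + ε • Cbar) * X').trace}

/-- The dual optimal set `D*(ε)`. -/
def DualOpt (C Cbar : Matrix (Fin n) (Fin n) ℝ) (A : Fin m → Matrix (Fin n) (Fin n) ℝ)
    (b : Fin m → ℝ) (ε : ℝ) : Set ((Fin m → ℝ) × Matrix (Fin n) (Fin n) ℝ) :=
  {p | DualFeasible C Cbar A ε p.1 p.2 ∧ ∀ y' S', DualFeasible C Cbar A ε y' S' →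
    ∑ i, b i * y' i ≤ ∑ i, b i * p.1 i}

/-- A maximally complementary optimal solution: `X` lies in the relative interior of `P*(ε)`
and `(y, S)` in the relative interior of `D*(ε)`. -/
def MaxComp (C Cbar : Matrix (Fin n) (Fin n) ℝ) (A : Fin m → Matrix (Fin n) (Fin n) ℝ)
    (b : Fin m → ℝ) (ε : ℝ) (X : Matrix (Fin n) (Fin n) ℝ) (y : Fin m → ℝ)
    (S : Matrix (Fin n) (Fin n) ℝ) : Prop :=
  X ∈ intrinsicInterior ℝ (PrimalOpt C Cbar A b ε) ∧
    (y, S) ∈ intrinsicInterior ℝ (DualOpt C Cbar A b ε)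

/-- `π(ε) = π(ε')`: the optimal partitions at `ε` and `ε'` coincide, expressed through
maximally complementary solutions (`B = range X*`, `N = range S*`, `T` being determined
by `B` and `N`). -/
def SamePartition (C Cbar : Matrix (Fin n) (Fin n) ℝ) (A : Fin m → Matrix (Fin n) (Fin n) ℝ)
    (b : Fin m → ℝ) (ε ε' : ℝ) : Prop :=
  ∃ X y S X' y' S', MaxComp C Cbar A b ε X y S ∧ MaxComp C Cbar A b ε' X' y' S' ∧
    LinearMap.range X.mulVecLin = LinearMap.range X'.mulVecLin ∧
    LinearMap.range S.mulVecLin = LinearMap.range S'.mulVecLin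

/-- The standing assumptions: symmetric data, linearly independent constraint matrices and
the interior point condition at `ε = 0`. -/
def StandingAssumptions (C Cbar : Matrix (Fin n) (Fin n) ℝ)
    (A : Fin m → Matrix (Fin n) (Fin n) ℝ) (b : Fin m → ℝ) : Prop :=
  C.IsSymm ∧ Cbar.IsSymm ∧ (∀ i, (A i).IsSymm) ∧ LinearIndependent ℝ A ∧
    ∃ X y S, PrimalFeasible A b X ∧ X.PosDef ∧ DualFeasible C Cbar A 0 y S ∧ S.PosDef

/-- The invariancy set of `ε̄`. -/
def InvSet (C Cbar : Matrix (Fin n) (Fin n) ℝ) (A : Fin m → Matrix (Fin n) (Fin n) ℝ)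
    (b : Fin m → ℝ) (εbar : ℝ) : Set ℝ :=
  {ε | ε ∈ interior (Eset C Cbar A b) ∧ SamePartition C Cbar A b ε εbar}

/-- `dim B(ε) = dim B(ε')` and `dim N(ε) = dim N(ε')`, expressed through maximally
complementary solutions. -/
def DimsMatch (C Cbar : Matrix (Fin n) (Fin n) ℝ) (A : Fin m → Matrix (Fin n) (Fin n) ℝ)
    (b : Fin m → ℝ) (ε ε' : ℝ) : Prop :=
  ∀ X y S X' y' S', MaxComp C Cbar A b ε X y S → MaxComp C Cbar A b ε' X' y' S' →
    Module.finrank ℝ (LinearMap.range X.mulVecLin) =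
        Module.finrank ℝ (LinearMap.range X'.mulVecLin) ∧
      Module.finrank ℝ (LinearMap.range S.mulVecLin) =
        Module.finrank ℝ (LinearMap.range S'.mulVecLin)

/-- A transition point: a singleton invariancy set such that every neighborhood contains a
parameter at which `dim B` or `dim N` differs. -/
def IsTransitionPoint (C Cbar : Matrix (Fin n) (Fin n) ℝ) (A : Fin m → Matrix (Fin n) (Fin n) ℝ)
    (b : Fin m → ℝ) (εbar : ℝ) : Prop :=
  εbar ∈ interior (Eset C Cbar A b) ∧
    (∀ ε ∈ interior (Eset C Cbar A b), ε ≠ εbar → ¬ SamePartition C Cbar A b ε εbar) ∧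
    ∀ ξ : ℝ, 0 < ξ → ∃ ε ∈ Set.Ioo (εbar - ξ) (εbar + ξ) ∩ interior (Eset C Cbar A b),
      ¬ DimsMatch C Cbar A b ε εbar

/-- Existence of a strictly complementary optimal solution at `ε`. -/
def HasStrictComp (C Cbar : Matrix (Fin n) (Fin n) ℝ) (A : Fin m → Matrix (Fin n) (Fin n) ℝ)
    (b : Fin m → ℝ) (ε : ℝ) : Prop :=
  ∃ X y S, X ∈ PrimalOpt C Cbar A b ε ∧ (y, S) ∈ DualOpt C Cbar A b ε ∧ (X + S).PosDef

/-- Nonsingularity of the Jacobian `J(X, y, S)` of the optimality system, as a linear map on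
`S^n × ℝ^m × S^n`: only the trivial symmetric triple is mapped to zero. -/
def JNonsingular (A : Fin m → Matrix (Fin n) (Fin n) ℝ)
    (X S : Matrix (Fin n) (Fin n) ℝ) : Prop :=
  ∀ (DX DS : Matrix (Fin n) (Fin n) ℝ) (Dy : Fin m → ℝ), DX.IsSymm → DS.IsSymm →
    (∀ i, ((A i) * DX).trace = 0) → ((∑ i, Dy i • A i) + DS = 0) →
    (DX * S + S * DX + X * DS + DS * X = 0) → DX = 0 ∧ Dy = 0 ∧ DS = 0

/-- Primal nondegeneracy of a primal feasible `X`. -/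
def PrimalNondeg (A : Fin m → Matrix (Fin n) (Fin n) ℝ)
    (X : Matrix (Fin n) (Fin n) ℝ) : Prop :=
  ∃ (r : ℕ) (M₁ : Matrix (Fin n) (Fin r) ℝ) (M₂ : Matrix (Fin n) (Fin (n - r)) ℝ),
    M₁ᵀ * M₁ = 1 ∧ M₂ᵀ * M₂ = 1 ∧ M₁ᵀ * M₂ = 0 ∧
    LinearMap.range M₁.mulVecLin = LinearMap.range X.mulVecLin ∧
    LinearIndependent ℝ (fun i =>
      Matrix.fromBlocks (M₁ᵀ * (A i) * M₁) (M₁ᵀ * (A i) * M₂) (M₂ᵀ * (A i) * M₁) 0)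

/-- Dual nondegeneracy of a dual feasible `(y, S)` (the condition involves only `S`). -/
def DualNondeg (A : Fin m → Matrix (Fin n) (Fin n) ℝ)
    (S : Matrix (Fin n) (Fin n) ℝ) : Prop :=
  ∃ (k : ℕ) (N₁ : Matrix (Fin n) (Fin k) ℝ),
    N₁ᵀ * N₁ = 1 ∧ LinearMap.range N₁.mulVecLin = LinearMap.ker S.mulVecLin ∧
    ∀ W : Matrix (Fin k) (Fin k) ℝ, W.IsSymm →
      W ∈ Submodule.span ℝ (Set.range fun i => N₁ᵀ * (A i) * N₁)

/-- A central solution with parameter `μ` for the problems `(P_ε)` and `(D_ε)`. -/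
def CentralSol (C Cbar : Matrix (Fin n) (Fin n) ℝ) (A : Fin m → Matrix (Fin n) (Fin n) ℝ)
    (b : Fin m → ℝ) (ε μ : ℝ) (X : Matrix (Fin n) (Fin n) ℝ) (y : Fin m → ℝ)
    (S : Matrix (Fin n) (Fin n) ℝ) : Prop :=
  PrimalFeasible A b X ∧ DualFeasible C Cbar A ε y S ∧
    X * S = μ • (1 : Matrix (Fin n) (Fin n) ℝ)

/-- The Frobenius norm of a matrix. -/
def frobNorm {α β : Type*} [Fintype α] [Fintype β] (M : Matrix α β ℝ) : ℝ :=
  Real.sqrt (∑ i, ∑ j, (M i j) ^ 2)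

/-- The spectral norm (induced 2-norm) of a square matrix. -/
def specNorm {N : ℕ} (M : Matrix (Fin N) (Fin N) ℝ) : ℝ :=
  ‖LinearMap.toContinuousLinearMap (Matrix.toEuclideanLin M)‖

/-- The smallest eigenvalue of a symmetric matrix, via the Rayleigh quotient. -/
def lamMin {k : ℕ} (M : Matrix (Fin k) (Fin k) ℝ) : ℝ :=
  sInf {r : ℝ | ∃ x : Fin k → ℝ, (∑ i, (x i) ^ 2) = 1 ∧ r = x ⬝ᵥ M.mulVec x}

/-- `θ^μ`: the operator norm of the inverse of the Jacobian `J(X, y, S)` on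
`S^n × ℝ^m × S^n`, characterized as the least constant `t ≥ 0` with
`‖(ΔX, Δy, ΔS)‖ ≤ t * ‖J(X,y,S)(ΔX, Δy, ΔS)‖` for all symmetric `ΔX`, `ΔS`. -/
def thetaMu (A : Fin m → Matrix (Fin n) (Fin n) ℝ)
    (X S : Matrix (Fin n) (Fin n) ℝ) : ℝ :=
  sInf {t : ℝ | 0 ≤ t ∧ ∀ (DX DS : Matrix (Fin n) (Fin n) ℝ) (Dy : Fin m → ℝ),
    DX.IsSymm → DS.IsSymm →
    Real.sqrt (frobNorm DX ^ 2 + (∑ i, (Dy i) ^ 2) + frobNorm DS ^ 2) ≤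
      t * Real.sqrt ((∑ i, (((A i) * DX).trace) ^ 2) +
        frobNorm ((∑ i, Dy i • A i) + DS) ^ 2 +
        frobNorm ((1 / 2 : ℝ) • (DX * S + S * DX + X * DS + DS * X)) ^ 2)}

/-- A nonlinearity interval: a non-singleton open subinterval of `int(E)`, of maximal length,
on which `dim B(·)` and `dim N(·)` are constant while the optimal partition `π(·)` varies. -/
def IsNonlinearityInterval (C Cbar : Matrix (Fin n) (Fin n) ℝ)
    (A : Fin m → Matrix (Fin n) (Fin n) ℝ) (b : Fin m → ℝ) (I : Set ℝ) : Prop :=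
  I ⊆ interior (Eset C Cbar A b) ∧ IsOpen I ∧ I.OrdConnected ∧
    (∃ a ∈ I, ∃ c ∈ I, a ≠ c) ∧
    (∀ ε ∈ I, ∀ ε' ∈ I, DimsMatch C Cbar A b ε ε') ∧
    ¬ (∀ ε ∈ I, ∀ ε' ∈ I, SamePartition C Cbar A b ε ε') ∧
    ∀ I' : Set ℝ, I ⊆ I' → I' ⊆ interior (Eset C Cbar A b) → IsOpen I' → I'.OrdConnected →
      (∀ ε ∈ I', ∀ ε' ∈ I', DimsMatch C Cbar A b ε ε') → I' = I

end

/-!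
The optimality system `⟨Aᵢ, X⟩ = bᵢ`, `∑ yᵢ Aᵢ + S = C + ε C̄`, `X S + S X = 0` has a left-hand
side that does not depend on `ε`. If its Jacobian is nonsingular at a solution `(X*, y*, S*)`, then
`X* + S*` is positive definite and the inverse function theorem yields, for every `ε` close to `ε̄`,
a solution `(X, y, S)` near `(X*, y*, S*)`. Since `X + S` remains positive definite, the equation
`X S + S X = 0` forces `X` and `S` to be positive semidefinite with `X S = 0`, so `(X, y, S)` is
optimal, and it is the only optimal solution because the Jacobian is still nonsingular there. Ranks
are lower semicontinuous and `rank X + rank S ≤ n = rank X* + rank S*`, so neither rank changes, and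
`ε̄` is not a transition point. Strict complementarity together with primal and dual nondegeneracy
makes the Jacobian nonsingular.
-/

section PosSemidef

open scoped ComplexOrder

variable {𝕜 ι κ : Type*} [RCLike 𝕜] [Fintype ι] [Fintype κ]

theorem mul_eq_zero_symm_of_isHermitian {X S : Matrix ι ι 𝕜} (hX : X.IsHermitian)
    (hS : S.IsHermitian) (h : X * S = 0) : S * X = 0 := by
  rw [← conjTranspose_eq_zero, conjTranspose_mul, hX.eq, hS.eq, h]

theorem exists_eq_conjTranspose_mul_self {X : Matrix ι ι 𝕜} (hX : X.PosSemidef) :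
    ∃ B : Matrix ι ι 𝕜, X = Bᴴ * B := by
  classical
  open scoped MatrixOrder in
  exact CStarAlgebra.nonneg_iff_eq_star_mul_self.mp hX.nonneg

theorem posSemidef_mul_eq_zero_of_trace_eq_zero {X : Matrix ι ι 𝕜} {Y : Matrix ι κ 𝕜}
    (hX : X.PosSemidef) (h : (Yᴴ * X * Y).trace = 0) : X * Y = 0 := by
  obtain ⟨B, rfl⟩ := exists_eq_conjTranspose_mul_self hX
  rw [conjTranspose_mul_self_mul_eq_zero, ← trace_conjTranspose_mul_self_eq_zero_iff]
  rwa [conjTranspose_mul, ← Matrix.mul_assoc, Matrix.mul_assoc Yᴴ]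

theorem posSemidef_mul_eq_zero_of_trace_mul_eq_zero {X S : Matrix ι ι 𝕜} (hX : X.PosSemidef)
    (hS : S.PosSemidef) (h : (X * S).trace = 0) : X * S = 0 := by
  obtain ⟨B, rfl⟩ := exists_eq_conjTranspose_mul_self hS
  have hXB : X * Bᴴ = 0 := posSemidef_mul_eq_zero_of_trace_eq_zero hX <| by
    rwa [conjTranspose_conjTranspose, Matrix.mul_assoc, trace_mul_comm, Matrix.mul_assoc]
  rw [← Matrix.mul_assoc, hXB, Matrix.zero_mul]

theorem posSemidef_trace_mul_nonneg {X S : Matrix ι ι 𝕜} (hX : X.PosSemidef)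
    (hS : S.PosSemidef) : 0 ≤ (X * S).trace := by
  obtain ⟨B, rfl⟩ := exists_eq_conjTranspose_mul_self hS
  rw [← Matrix.mul_assoc, trace_mul_comm, ← Matrix.mul_assoc]
  exact (hX.mul_mul_conjTranspose_same B).trace_nonneg

theorem posSemidef_mul_eq_zero_of_sylvester {X : Matrix ι ι 𝕜} {Z : Matrix κ κ 𝕜}
    {G : Matrix ι κ 𝕜} (hX : X.PosSemidef) (hZ : Z.PosSemidef) (h : X * G + G * Z = 0) :
    X * G = 0 := by
  have hsum : (Gᴴ * X * G).trace + (G * Z * Gᴴ).trace = 0 := by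
    rw [trace_mul_comm (G * Z), Matrix.mul_assoc, ← trace_add, ← Matrix.mul_add, h,
      Matrix.mul_zero, trace_zero]
  exact posSemidef_mul_eq_zero_of_trace_eq_zero hX
    ((add_eq_zero_iff_of_nonneg (hX.conjTranspose_mul_mul_same G).trace_nonneg
      (hZ.mul_mul_conjTranspose_same G).trace_nonneg).1 hsum).1

theorem posSemidef_of_posSemidef_lyapunov {W X : Matrix ι ι 𝕜} (hW : W.PosDef)
    (hX : X.IsHermitian) (h : (X * W + W * X).PosSemidef) : X.PosSemidef := by
  classical
  refine hX.posSemidef_iff_eigenvalues_nonneg.2 fun i => ?_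
  set l : 𝕜 := (hX.eigenvalues i : 𝕜) with hl
  set v : ι → 𝕜 := (hX.eigenvectorBasis i).ofLp with hv
  have hv0 : v ≠ 0 := by
    simpa [hv] using hX.eigenvectorBasis.orthonormal.ne_zero i
  have hXv : X *ᵥ v = l • v := by
    rw [hl, ← RCLike.real_smul_eq_coe_smul (K := 𝕜)]
    exact hX.mulVec_eigenvectorBasis i
  have hvX : star v ᵥ* X = l • star v := by
    rw [← star_star (star v ᵥ* X), star_vecMul, star_star, hX.eq, hXv, star_smul, hl,
      RCLike.star_def, RCLike.conj_ofReal]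
  have hquad : star v ⬝ᵥ (X * W + W * X) *ᵥ v = l * (2 * (star v ⬝ᵥ W *ᵥ v)) := by
    rw [Matrix.add_mulVec, dotProduct_add, ← mulVec_mulVec, ← mulVec_mulVec, hXv,
      dotProduct_mulVec, hvX, mulVec_smul, smul_dotProduct, dotProduct_smul]
    simp only [smul_eq_mul]
    ring
  have hnonneg : 0 ≤ l * (2 * (star v ⬝ᵥ W *ᵥ v)) := hquad ▸ h.dotProduct_mulVec_nonneg v
  have hpos : 0 < 2 * (star v ⬝ᵥ W *ᵥ v) := mul_pos two_pos (hW.dotProduct_mulVec_pos hv0)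
  by_contra hneg
  have hl0 : l < 0 := RCLike.ofReal_lt_zero.2 (lt_of_not_ge hneg)
  exact (mul_neg_of_neg_of_pos hl0 hpos).not_ge hnonneg

theorem posSemidef_of_mul_add_mul_eq_zero {X S : Matrix ι ι 𝕜} (hX : X.IsHermitian)
    (hXS : X * S + S * X = 0) (hW : (X + S).PosDef) : X.PosSemidef := by
  refine posSemidef_of_posSemidef_lyapunov hW hX ?_
  have hsq : X * (X + S) + (X + S) * X = Xᴴ * X + Xᴴ * X := by
    rw [hX.eq, Matrix.mul_add, Matrix.add_mul, add_add_add_comm, hXS, add_zero]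
  rw [hsq]
  exact (posSemidef_conjTranspose_mul_self X).add (posSemidef_conjTranspose_mul_self X)

variable {X S D E : Matrix ι ι 𝕜}

theorem posSemidef_mul_mul_eq_zero_of_lyapunov (hX : X.PosSemidef)
    (h : X * (X * E + E * X) * X = 0) : X * E * X = 0 := by
  have hlyap : X * (X * E * X) + X * E * X * X = 0 := by
    simpa only [Matrix.mul_add, Matrix.add_mul, Matrix.mul_assoc] using h
  have hXX : Xᴴ * X * (E * X) = 0 := by
    rw [hX.isHermitian.eq, Matrix.mul_assoc, ← Matrix.mul_assoc X E]
    exact posSemidef_mul_eq_zero_of_sylvester hX hX hlyap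
  rw [Matrix.mul_assoc]
  exact (conjTranspose_mul_self_mul_eq_zero X (E * X)).1 hXX

theorem mul_add_mul_eq_zero_of_linearized [DecidableEq ι] (hX : X.PosSemidef) (hS : S.PosSemidef)
    (hXS : X * S = 0) (hW : IsUnit (X + S)) (h : D * S + S * D + X * E + E * X = 0) :
    D * S + X * E = 0 := by
  have hSX : S * X = 0 := mul_eq_zero_symm_of_isHermitian hX.isHermitian hS.isHermitian hXS
  have hXEX : X * E * X = 0 := posSemidef_mul_mul_eq_zero_of_lyapunov hX <| by
    linear_combination (norm := noncomm_ring) X * h * X - X * D * hSX - hXS * D * X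
  have hSDS : S * D * S = 0 := posSemidef_mul_mul_eq_zero_of_lyapunov hS <| by
    linear_combination (norm := noncomm_ring) S * h * S - S * E * hXS - hSX * E * S
  refine hW.mul_right_eq_zero.1 ?_
  linear_combination (norm := noncomm_ring) X * h - hXS * D - hXEX + hSDS + hSX * E

theorem mul_eq_zero_of_trace_mul_conj_eq_zero {V : Matrix ι ι 𝕜} (hS : S.PosSemidef)
    (hV : V.PosDef) (hD : D.IsHermitian) (h : (S * (D * V * D)).trace = 0) : S * D = 0 := by
  classical
  have hDVD : (D * V * D).PosSemidef := by
    simpa only [hD.eq] using hV.posSemidef.conjTranspose_mul_mul_same D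
  have hzero : S * (D * V * D) = 0 := posSemidef_mul_eq_zero_of_trace_mul_eq_zero hS hDVD h
  have hVDS : V * (D * S) = 0 := posSemidef_mul_eq_zero_of_trace_eq_zero hV.posSemidef <| by
    rw [conjTranspose_mul, hD.eq, hS.isHermitian.eq, ← Matrix.mul_assoc, Matrix.mul_assoc S,
      Matrix.mul_assoc S, hzero, Matrix.zero_mul, trace_zero]
  have hDS : D * S = 0 := hV.isUnit.mul_right_eq_zero.1 hVDS
  exact mul_eq_zero_symm_of_isHermitian hD hS.isHermitian hDS

/- With `V = (X + S)⁻¹` and `X * E = -(D * S)`, `0 = tr (D V (X + S) E)` splits into minus the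
sum of the nonnegative numbers `tr (S D V D)` and `tr (X E V E)`. -/
theorem mul_eq_zero_of_linearized_of_trace_eq_zero (hX : X.PosSemidef)
    (hS : S.PosSemidef) (hD : D.IsHermitian) (hE : E.IsHermitian) (hXS : X * S = 0)
    (hW : (X + S).PosDef) (h : D * S + S * D + X * E + E * X = 0) (hDE : (D * E).trace = 0) :
    S * D = 0 ∧ X * E = 0 := by
  classical
  have hSX : S * X = 0 :=
    mul_eq_zero_symm_of_isHermitian hX.isHermitian hS.isHermitian hXS
  have hDS : X * E = -(D * S) :=
    eq_neg_of_add_eq_zero_right (mul_add_mul_eq_zero_of_linearized hX hS hXS hW.isUnit h)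
  have hdet : IsUnit (X + S).det := (isUnit_iff_isUnit_det _).1 hW.isUnit
  set V : Matrix ι ι 𝕜 := (X + S)⁻¹
  have hV : V.PosDef := hW.inv
  have hSV : S * V = V * S := by
    have hcomm : (X + S) * S = S * (X + S) := by rw [Matrix.add_mul, Matrix.mul_add, hXS, hSX]
    calc S * V = V * ((X + S) * S) * V := by rw [nonsing_inv_mul_cancel_left _ _ hdet]
      _ = V * S := by
        rw [hcomm, ← Matrix.mul_assoc, mul_nonsing_inv_cancel_right _ _ hdet]
  have hS_trace : (S * (D * V * D)).trace = -(D * V * X * E).trace := by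
    rw [trace_mul_comm, Matrix.mul_assoc (D * V), Matrix.mul_assoc (D * V), hDS, Matrix.mul_neg,
      trace_neg, neg_neg]
  have hX_trace : (X * (E * V * E)).trace = -(D * V * S * E).trace := by
    rw [Matrix.mul_assoc D, ← hSV, ← Matrix.mul_assoc, ← Matrix.mul_assoc, hDS, ← Matrix.mul_assoc,
      Matrix.neg_mul, Matrix.neg_mul, trace_neg]
  have hsum : (S * (D * V * D)).trace + (X * (E * V * E)).trace = 0 := by
    rw [hS_trace, hX_trace, ← neg_add, ← trace_add, ← Matrix.add_mul, ← Matrix.mul_add,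
      nonsing_inv_mul_cancel_right _ _ hdet, hDE, neg_zero]
  have hDVD : (D * V * D).PosSemidef := by
    simpa only [hD.eq] using hV.posSemidef.conjTranspose_mul_mul_same D
  have hEVE : (E * V * E).PosSemidef := by
    simpa only [hE.eq] using hV.posSemidef.conjTranspose_mul_mul_same E
  have hzero := (add_eq_zero_iff_of_nonneg (posSemidef_trace_mul_nonneg hS hDVD)
    (posSemidef_trace_mul_nonneg hX hEVE)).1 hsum
  exact ⟨mul_eq_zero_of_trace_mul_conj_eq_zero hS hV hD hzero.1,
    mul_eq_zero_of_trace_mul_conj_eq_zero hX hV hE hzero.2⟩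

end PosSemidef

section Rank

variable {K ι κ : Type*} [Fintype κ]

theorem matrix_rank_add_le [Finite ι] [Field K] (X Y : Matrix ι κ K) :
    (X + Y).rank ≤ X.rank + Y.rank := by
  have hrange : LinearMap.range (X + Y).mulVecLin ≤
      LinearMap.range X.mulVecLin ⊔ LinearMap.range Y.mulVecLin := by
    rintro _ ⟨v, rfl⟩
    rw [mulVecLin_add]
    exact Submodule.add_mem_sup ⟨v, rfl⟩ ⟨v, rfl⟩
  exact (Submodule.finrank_mono hrange).trans (Submodule.finrank_add_le_finrank_add_finrank _ _)

theorem isOpen_setOf_le_matrix_rank [Finite ι] [NontriviallyNormedField K] [CompleteSpace K]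
    (r : ℕ) : IsOpen {M : Matrix ι κ K | r ≤ M.rank} := by
  classical
  cases nonempty_fintype ι
  let φ : Matrix ι κ K →ₗ[K] ((κ → K) →L[K] (ι → K)) :=
    LinearMap.toContinuousLinearMap.toLinearMap ∘ₗ toLin'.toLinearMap
  have hφ : Continuous φ := φ.continuous_of_finiteDimensional
  have hiff (M : Matrix ι κ K) :
      r ≤ M.rank ↔ (r : Cardinal) ≤ (φ M : (κ → K) →ₗ[K] ι → K).rank := by
    change r ≤ Module.finrank K _ ↔ (r : Cardinal) ≤ Module.rank K _
    rw [← Module.finrank_eq_rank, Nat.cast_le]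
    rfl
  simp only [hiff]
  exact (isOpen_setOfPred_nat_le_rank r).preimage hφ

end Rank

section SymmMatrix

variable (ι : Type*)

/-- The real vector space of symmetric matrices. -/
def symmMatrix : Submodule ℝ (Matrix ι ι ℝ) where
  carrier := {M | M.IsSymm}
  add_mem' := IsSymm.add
  zero_mem' := isSymm_zero
  smul_mem' c _ hM := hM.smul c

variable {ι}

theorem mem_symmMatrix {M : Matrix ι ι ℝ} : M ∈ symmMatrix ι ↔ M.IsSymm := Iff.rfl

theorem posDef_iff_forall_sphere_dotProduct_pos [Fintype ι] {M : symmMatrix ι} :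
    (M : Matrix ι ι ℝ).PosDef ↔ ∀ v ∈ Metric.sphere (0 : ι → ℝ) 1, 0 < v ⬝ᵥ M.1 *ᵥ v := by
  constructor
  · intro hM v hv
    exact hM.dotProduct_mulVec_pos (ne_zero_of_mem_unit_sphere ⟨v, hv⟩)
  · intro h
    have hM : (M : Matrix ι ι ℝ).IsHermitian := isHermitian_iff_isSymm.2 M.2
    refine .of_dotProduct_mulVec_pos hM fun v hv => ?_
    have hpos := h (‖v‖⁻¹ • v) (by simp [norm_smul, hv])
    rw [mulVec_smul, smul_dotProduct, dotProduct_smul, smul_smul, smul_eq_mul] at hpos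
    exact pos_of_mul_pos_right hpos (mul_self_nonneg _)

theorem isOpen_setOf_posDef [Finite ι] :
    IsOpen {M : symmMatrix ι | (M : Matrix ι ι ℝ).PosDef} := by
  cases nonempty_fintype ι
  have hcont : Continuous fun z : symmMatrix ι × (ι → ℝ) => z.2 ⬝ᵥ z.1.1 *ᵥ z.2 :=
    continuous_snd.dotProduct ((continuous_subtype_val.comp continuous_fst).matrix_mulVec
      continuous_snd)
  refine isOpen_iff_eventually.2 fun M hM => ?_
  have hev := (isCompact_sphere (0 : ι → ℝ) 1).eventually_forall_of_forall_eventually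
    (x₀ := M) (P := fun M v => 0 < v ⬝ᵥ M.1 *ᵥ v) fun v hv =>
      hcont.continuousAt.eventually <| lt_mem_nhds <|
        posDef_iff_forall_sphere_dotProduct_pos.1 hM v hv
  filter_upwards [hev] with M' hM' using posDef_iff_forall_sphere_dotProduct_pos.2 hM'

theorem posSemidef_of_forall_le_trace_mul [Fintype ι] {S : Matrix ι ι ℝ} {c : ℝ} (hS : S.IsSymm)
    (h : ∀ M : Matrix ι ι ℝ, M.PosSemidef → c ≤ (S * M).trace) : S.PosSemidef ∧ c ≤ 0 := by
  have hc : c ≤ 0 := by simpa using h 0 .zero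
  refine ⟨.of_dotProduct_mulVec_nonneg (isHermitian_iff_isSymm.2 hS) fun v => ?_, hc⟩
  have hray (t : ℝ) (ht : 0 ≤ t) : c ≤ t * (v ⬝ᵥ S *ᵥ v) := by
    have := h _ ((posSemidef_vecMulVec_self_star v).smul ht)
    rwa [Matrix.mul_smul, trace_smul, mul_vecMulVec, trace_vecMulVec, star_trivial, smul_eq_mul,
      dotProduct_comm] at this
  rw [star_trivial]
  by_contra! hneg
  have := hray ((c - 1) / (v ⬝ᵥ S *ᵥ v)) (div_nonneg_of_nonpos (by linarith) hneg.le)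
  rw [div_mul_cancel₀ _ hneg.ne] at this
  linarith

end SymmMatrix

section Lagrange

variable {E F : Type*} [AddCommGroup E] [Module ℝ E] [TopologicalSpace E] [IsTopologicalAddGroup E]
  [ContinuousSMul ℝ E] [AddCommGroup F] [Module ℝ F] [TopologicalSpace F]
  [IsTopologicalAddGroup F] [ContinuousSMul ℝ F] [T2Space F] [FiniteDimensional ℝ F]

theorem exists_lagrange_multiplier {U : Set E} (hUo : IsOpen U) (hUc : Convex ℝ U)
    {g : E →ₗ[ℝ] F} (hg : Function.Surjective g) (f : E →ₗ[ℝ] ℝ) {b : F} {p : ℝ}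
    (hslater : ∃ x ∈ U, g x = b) (hp : ∀ x ∈ U, g x = b → p ≤ f x) :
    ∃ φ : F →ₗ[ℝ] ℝ, ∀ x ∈ U, p + φ (g x - b) ≤ f x := by
  let T : E × ℝ →ₗ[ℝ] F × ℝ :=
    (g ∘ₗ LinearMap.fst ℝ E ℝ).prod (f ∘ₗ LinearMap.fst ℝ E ℝ + LinearMap.snd ℝ E ℝ)
  have hT : Function.Surjective T := by
    rintro ⟨u, t⟩
    obtain ⟨x, rfl⟩ := hg u
    exact ⟨(x, t - f x), by simp [T]⟩
  have hopen : IsOpen (T '' (U ×ˢ Ioi 0)) :=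
    T.isOpenMap_of_finiteDimensional hT _ (hUo.prod isOpen_Ioi)
  have hconvex : Convex ℝ (T '' (U ×ˢ Ioi 0)) := (hUc.prod (convex_Ioi 0)).linear_image T
  have hnotMem : (b, p) ∉ T '' (U ×ˢ Ioi 0) := by
    rintro ⟨⟨x, s⟩, ⟨hx, hs⟩, hxs⟩
    obtain ⟨hgx, hfx⟩ := Prod.mk.inj hxs
    have : f x + s = p := hfx
    linarith [hp x hx hgx, mem_Ioi.1 hs]
  obtain ⟨ψ, hψ⟩ := geometric_hahn_banach_open_point hconvex hopen hnotMem
  have hψ_apply (u : F) (t : ℝ) : ψ (u, t) = ψ (u, 0) + t * ψ (0, 1) := by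
    rw [← smul_eq_mul, ← map_smul, ← map_add]
    simp
  have hsep (x : E) (hx : x ∈ U) (s : ℝ) (hs : 0 < s) :
      ψ (g x - b, 0) + (f x + s - p) * ψ (0, 1) < 0 := by
    have hlt : ψ (T (x, s)) < ψ (b, p) := hψ _ ⟨(x, s), ⟨hx, hs⟩, rfl⟩
    rw [← sub_neg, ← map_sub] at hlt
    rwa [← hψ_apply]
  obtain ⟨x₀, hx₀, hgx₀⟩ := hslater
  have hneg : ψ (0, 1) < 0 := by
    have := hsep x₀ hx₀ 1 one_pos
    rw [hgx₀, sub_self, ← Prod.zero_eq_mk, map_zero, zero_add] at this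
    exact neg_of_mul_neg_right this (by linarith [hp x₀ hx₀ hgx₀])
  refine ⟨-(ψ (0, 1))⁻¹ • (ψ.toLinearMap ∘ₗ LinearMap.inl ℝ F ℝ), fun x hx => ?_⟩
  refine le_of_forall_pos_le_add fun s hs => ?_
  have hdiv := mul_pos_of_neg_of_neg (hsep x hx s hs) (inv_neg''.2 hneg)
  rw [add_mul, mul_assoc, mul_inv_cancel₀ hneg.ne] at hdiv
  change p + -(ψ (0, 1))⁻¹ * ψ (g x - b, 0) ≤ f x + s
  linarith

end Lagrange

section OptimalityMap

variable {ι κ : Type*} [Fintype ι]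

/-- The trace inner product `X ↦ ⟨C, X⟩` as a linear functional on symmetric matrices. -/
def tracePairing (C : symmMatrix ι) : symmMatrix ι →ₗ[ℝ] ℝ :=
  traceLinearMap ι ℝ ℝ ∘ₗ LinearMap.mulLeft ℝ (C : Matrix ι ι ℝ) ∘ₗ (symmMatrix ι).subtype

theorem tracePairing_apply (C X : symmMatrix ι) :
    tracePairing C X = (C * X : Matrix ι ι ℝ).trace := rfl

/-- The linear map `X ↦ (⟨Aᵢ, X⟩)ᵢ` of the primal equality constraints; its adjoint is
`Fintype.linearCombination ℝ A`. -/
def constraintMap (A : κ → symmMatrix ι) : symmMatrix ι →ₗ[ℝ] κ → ℝ :=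
  LinearMap.pi fun i => tracePairing (A i)

theorem constraintMap_apply (A : κ → symmMatrix ι) (X : symmMatrix ι) (i : κ) :
    constraintMap A X i = (A i * X : Matrix ι ι ℝ).trace := rfl

/-- The anticommutator `X * S + S * X` of symmetric matrices, whose vanishing encodes
complementarity in the optimality system. -/
def anticommutator : symmMatrix ι →ₗ[ℝ] symmMatrix ι →ₗ[ℝ] symmMatrix ι :=
  LinearMap.mk₂ ℝ
    (fun X S => ⟨X * S + S * X, by
      rw [mem_symmMatrix, IsSymm, transpose_add, transpose_mul, transpose_mul,
        (mem_symmMatrix.1 X.2).eq, (mem_symmMatrix.1 S.2).eq, add_comm]⟩)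
    (fun X Y S => Subtype.ext <| by simp [Matrix.add_mul, Matrix.mul_add, add_add_add_comm])
    (fun c X S => Subtype.ext <| by simp)
    (fun X S T => Subtype.ext <| by simp [Matrix.add_mul, Matrix.mul_add, add_add_add_comm])
    (fun c X S => Subtype.ext <| by simp)

theorem coe_anticommutator (X S : symmMatrix ι) :
    (anticommutator X S : Matrix ι ι ℝ) = X * S + S * X := rfl

variable [Fintype κ]

theorem tracePairing_linearCombination (A : κ → symmMatrix ι) (y : κ → ℝ) (X : symmMatrix ι) :
    tracePairing (Fintype.linearCombination ℝ A y) X = ∑ i, constraintMap A X i * y i := by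
  simp [tracePairing_apply, constraintMap_apply, Fintype.linearCombination_apply, Finset.sum_mul,
    trace_sum, mul_comm]

/-- The left-hand side `(⟨Aᵢ, X⟩)ᵢ, ∑ yᵢ Aᵢ + S, X S + S X` of the optimality system. The
perturbation parameter enters only the right-hand side `(b, C + ε C̄, 0)`. -/
def optimalityMap (A : κ → symmMatrix ι) (q : symmMatrix ι × (κ → ℝ) × symmMatrix ι) :
    (κ → ℝ) × symmMatrix ι × symmMatrix ι :=
  (constraintMap A q.1, Fintype.linearCombination ℝ A q.2.1 + q.2.2, anticommutator q.1 q.2.2)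

/-- The Jacobian of `optimalityMap A` at `(X, y, S)`, up to the factor `1 / 2` on its last
component. -/
def optimalityJacobian (A : κ → symmMatrix ι) (X S : symmMatrix ι) :
    symmMatrix ι × (κ → ℝ) × symmMatrix ι →ₗ[ℝ] (κ → ℝ) × symmMatrix ι × symmMatrix ι :=
  (constraintMap A ∘ₗ .fst ℝ _ _).prod <|
    (Fintype.linearCombination ℝ A ∘ₗ .fst ℝ _ _ ∘ₗ .snd ℝ _ _ + .snd ℝ _ _ ∘ₗ .snd ℝ _ _).prod
      (anticommutator X ∘ₗ .snd ℝ _ _ ∘ₗ .snd ℝ _ _ + anticommutator.flip S ∘ₗ .fst ℝ _ _)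

theorem optimalityJacobian_apply (A : κ → symmMatrix ι) (X S DX DS : symmMatrix ι) (Dy : κ → ℝ) :
    optimalityJacobian A X S (DX, Dy, DS) = (constraintMap A DX,
      Fintype.linearCombination ℝ A Dy + DS, anticommutator X DS + anticommutator DX S) := rfl

theorem optimalityJacobian_surjective {A : κ → symmMatrix ι} {X S : symmMatrix ι}
    (h : Function.Injective (optimalityJacobian A X S)) :
    Function.Surjective (optimalityJacobian A X S) :=
  (LinearMap.injective_iff_surjective_of_finrank_eq_finrank (by
    simp only [Module.finrank_prod]; ring)).1 h

attribute [local instance] Matrix.normedAddCommGroup Matrix.normedSpace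

theorem hasStrictFDerivAt_optimalityMap (A : κ → symmMatrix ι)
    (q : symmMatrix ι × (κ → ℝ) × symmMatrix ι) :
    HasStrictFDerivAt (optimalityMap A)
      (LinearMap.toContinuousLinearMap (optimalityJacobian A q.1 q.2.2)) q := by
  have hX : HasStrictFDerivAt Prod.fst (ContinuousLinearMap.fst ℝ _ _) q := hasStrictFDerivAt_fst
  have hS : HasStrictFDerivAt (fun q : symmMatrix ι × (κ → ℝ) × symmMatrix ι => q.2.2)
      (ContinuousLinearMap.snd ℝ _ _ ∘L ContinuousLinearMap.snd ℝ _ _) q :=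
    hasStrictFDerivAt_snd.snd
  have hbilin : HasStrictFDerivAt
      (fun q : symmMatrix ι × (κ → ℝ) × symmMatrix ι => anticommutator q.1 q.2.2) _ q :=
    anticommutator.toContinuousBilinearMap.hasStrictFDerivAt_of_bilinear hX hS
  have hprimal := (LinearMap.toContinuousLinearMap
    (constraintMap A ∘ₗ .fst ℝ (symmMatrix ι) ((κ → ℝ) × symmMatrix ι))).hasStrictFDerivAt (x := q)
  have hdual := (LinearMap.toContinuousLinearMap
    ((Fintype.linearCombination ℝ A ∘ₗ .fst ℝ _ _ + .snd ℝ _ _) ∘ₗ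
      .snd ℝ (symmMatrix ι) ((κ → ℝ) × symmMatrix ι))).hasStrictFDerivAt (x := q)
  exact hprimal.prodMk (hdual.prodMk hbilin)

open Filter Topology

theorem map_optimalityMap_nhds {A : κ → symmMatrix ι} {q : symmMatrix ι × (κ → ℝ) × symmMatrix ι}
    (h : Function.Injective (optimalityJacobian A q.1 q.2.2)) :
    map (optimalityMap A) (𝓝 q) = 𝓝 (optimalityMap A q) :=
  (hasStrictFDerivAt_optimalityMap A q).map_nhds_eq_of_surj
    (LinearMap.range_eq_top.2 (optimalityJacobian_surjective h))

theorem eventually_injective_optimalityJacobian {A : κ → symmMatrix ι}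
    {q : symmMatrix ι × (κ → ℝ) × symmMatrix ι}
    (h : Function.Injective (optimalityJacobian A q.1 q.2.2)) :
    ∀ᶠ q' in 𝓝 q, Function.Injective (optimalityJacobian A q'.1 q'.2.2) := by
  have hcont : Continuous fun q : symmMatrix ι × (κ → ℝ) × symmMatrix ι =>
      LinearMap.toContinuousLinearMap (optimalityJacobian A q.1 q.2.2) := by
    refine continuous_clm_apply.2 fun d => ?_
    exact continuous_const.prodMk <| continuous_const.prodMk <|
      ((anticommutator.flip d.2.2).continuous_of_finiteDimensional.comp continuous_fst).add <|
        (anticommutator d.1).continuous_of_finiteDimensional.comp <|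
          continuous_snd.comp continuous_snd
  exact hcont.continuousAt.eventually (ContinuousLinearMap.isOpen_injective.mem_nhds h)

end OptimalityMap

section StrongDuality

variable {ι κ : Type*}

theorem convex_setOf_posDef : Convex ℝ {M : symmMatrix ι | (M : Matrix ι ι ℝ).PosDef} := by
  refine convex_iff_forall_pos.2 fun M hM N hN s t hs ht _ => ?_
  exact (hM.smul hs).add (hN.smul ht)

theorem le_map_of_posSemidef {f : symmMatrix ι →ₗ[ℝ] ℝ} {c : ℝ}
    (h : ∀ M : symmMatrix ι, (M : Matrix ι ι ℝ).PosDef → c ≤ f M) {M : symmMatrix ι}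
    (hM : (M : Matrix ι ι ℝ).PosSemidef) : c ≤ f M := by
  classical
  let I : symmMatrix ι := ⟨1, isSymm_one⟩
  have hshift (t : ℝ) (ht : 0 < t) : c ≤ f M + t * f I := by
    rw [← smul_eq_mul, ← map_smul, ← map_add]
    exact h _ (PosDef.posSemidef_add hM (PosDef.one.smul ht))
  have hlim : Filter.Tendsto (fun t : ℝ => f M + t * f I) (nhdsWithin 0 (Ioi 0)) (nhds (f M)) := by
    have hcont : Continuous fun t : ℝ => f M + t * f I := by fun_prop
    simpa using (hcont.tendsto 0).mono_left nhdsWithin_le_nhds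
  exact ge_of_tendsto hlim (eventually_mem_nhdsWithin.mono hshift)

theorem constraintMap_surjective_of_linearIndependent [Fintype ι] [Finite κ]
    {A : κ → symmMatrix ι} (hA : LinearIndependent ℝ A) :
    Function.Surjective (constraintMap A) := by
  classical
  cases nonempty_fintype κ
  rw [← LinearMap.range_eq_top]
  by_contra hrange
  obtain ⟨f, hf, hle⟩ := Submodule.exists_le_ker_of_lt_top _ (lt_top_iff_ne_top.2 hrange)
  let y : κ → ℝ := fun i => f fun j => if i = j then 1 else 0
  have hf_apply (u : κ → ℝ) : f u = ∑ i, u i * y i := f.pi_apply_eq_sum_univ u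
  let M : symmMatrix ι := Fintype.linearCombination ℝ A y
  have hM : (M.1ᴴ * M.1).trace = 0 := by
    rw [conjTranspose_eq_transpose_of_trivial, (mem_symmMatrix.1 M.2).eq, ← tracePairing_apply,
      tracePairing_linearCombination, ← hf_apply]
    exact hle ⟨M, rfl⟩
  have hy : y = 0 := funext <| Fintype.linearIndependent_iff.1 hA y <|
    Submodule.coe_eq_zero.1 (trace_conjTranspose_mul_self_eq_zero_iff.1 hM)
  exact hf (LinearMap.ext fun u => by simp [hf_apply, hy])

theorem exists_posSemidef_sub_linearCombination [Fintype ι] [Fintype κ] {A : κ → symmMatrix ι}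
    (hA : Function.Surjective (constraintMap A)) {C X₀ : symmMatrix ι} {p : ℝ}
    (hX₀ : (X₀ : Matrix ι ι ℝ).PosDef)
    (hp : ∀ X : symmMatrix ι, (X : Matrix ι ι ℝ).PosDef →
      constraintMap A X = constraintMap A X₀ → p ≤ tracePairing C X) :
    ∃ y : κ → ℝ, ((C - Fintype.linearCombination ℝ A y : symmMatrix ι) : Matrix ι ι ℝ).PosSemidef ∧
      p ≤ ∑ i, constraintMap A X₀ i * y i := by
  classical
  obtain ⟨φ, hφ⟩ := exists_lagrange_multiplier isOpen_setOf_posDef convex_setOf_posDef hA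
    (tracePairing C) ⟨X₀, hX₀, rfl⟩ hp
  let y : κ → ℝ := fun i => φ fun j => if i = j then 1 else 0
  have hφ_apply (u : κ → ℝ) : φ u = ∑ i, u i * y i := φ.pi_apply_eq_sum_univ u
  let S : symmMatrix ι := C - Fintype.linearCombination ℝ A y
  have hS (M : symmMatrix ι) : tracePairing S M = tracePairing C M - φ (constraintMap A M) := by
    rw [hφ_apply, ← tracePairing_linearCombination]
    simp [S, tracePairing_apply, Matrix.sub_mul]
  have hle (M : Matrix ι ι ℝ) (hM : M.PosSemidef) :
      p - φ (constraintMap A X₀) ≤ ((S : Matrix ι ι ℝ) * M).trace := by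
    refine le_map_of_posSemidef (f := tracePairing S) (fun N hN => ?_)
      (M := ⟨M, isHermitian_iff_isSymm.1 hM.isHermitian⟩) hM
    have := hφ N hN
    rw [hS]
    rw [map_sub] at this
    linarith
  have := posSemidef_of_forall_le_trace_mul S.2 hle
  exact ⟨y, this.1, by rw [← hφ_apply]; linarith [this.2]⟩

end StrongDuality

section Nondegeneracy

variable {ι κ l : Type*}

/- If `(X + S) v = 0`, every value of the last component `X ΔS + ΔS X + ΔX S + S ΔX` has a vanishing
quadratic form at `v`, so `v vᵀ` is not attained. -/
theorem posDef_add_of_injective_optimalityJacobian [Fintype ι] [Fintype κ] {A : κ → symmMatrix ι}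
    {X S : symmMatrix ι} (hX : (X : Matrix ι ι ℝ).PosSemidef) (hS : (S : Matrix ι ι ℝ).PosSemidef)
    (h : Function.Injective (optimalityJacobian A X S)) : (X + S : Matrix ι ι ℝ).PosDef := by
  refine .of_dotProduct_mulVec_pos (hX.add hS).isHermitian fun v hv => ?_
  refine ((hX.add hS).dotProduct_mulVec_nonneg v).lt_of_ne' fun hzero => hv ?_
  rw [Matrix.add_mulVec, dotProduct_add, add_eq_zero_iff_of_nonneg (hX.dotProduct_mulVec_nonneg v)
    (hS.dotProduct_mulVec_nonneg v), hX.dotProduct_mulVec_zero_iff,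
    hS.dotProduct_mulVec_zero_iff] at hzero
  obtain ⟨hXv, hSv⟩ := hzero
  have hvX : v ᵥ* (X : Matrix ι ι ℝ) = 0 := by
    rw [← mulVec_transpose, (mem_symmMatrix.1 X.2).eq, hXv]
  have hvS : v ᵥ* (S : Matrix ι ι ℝ) = 0 := by
    rw [← mulVec_transpose, (mem_symmMatrix.1 S.2).eq, hSv]
  let V : symmMatrix ι := ⟨vecMulVec v v, mem_symmMatrix.2 (transpose_vecMulVec v v)⟩
  obtain ⟨⟨DX, Dy, DS⟩, hD⟩ := optimalityJacobian_surjective h (0, 0, V)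
  have hV : (X * DS + DS * X + (DX * S + S * DX) : Matrix ι ι ℝ) = vecMulVec v v :=
    congrArg (fun q => (q.2.2 : Matrix ι ι ℝ)) hD
  have hquad := congrArg (fun M => v ⬝ᵥ M *ᵥ v) hV
  simpa [Matrix.add_mulVec, ← mulVec_mulVec, hXv, hSv, dotProduct_mulVec _ (X : Matrix ι ι ℝ),
    dotProduct_mulVec _ (S : Matrix ι ι ℝ), hvX, hvS, vecMulVec_mulVec] using hquad.symm

theorem exists_eq_mul_of_range_mulVecLin_le {R : Type*} [CommSemiring R] [Fintype κ] [Fintype l]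
    {M : Matrix ι κ R} {U : Matrix ι l R}
    (h : LinearMap.range U.mulVecLin ≤ LinearMap.range M.mulVecLin) :
    ∃ Z : Matrix κ l R, U = M * Z := by
  classical
  choose z hz using fun j => h ⟨Pi.single j 1, rfl⟩
  refine ⟨(of z)ᵀ, ext_col fun j => ?_⟩
  calc U.col j = U *ᵥ Pi.single j 1 := (mulVec_single_one U j).symm
    _ = M *ᵥ z j := (hz j).symm
    _ = (M * (of z)ᵀ).col j := by
      rw [← mulVec_single_one (M * (of z)ᵀ), ← mulVec_mulVec, mulVec_single_one]
      rfl

variable {n m : ℕ} {A : Fin m → Matrix (Fin n) (Fin n) ℝ} {X S : Matrix (Fin n) (Fin n) ℝ}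

theorem eq_zero_of_primalNondeg (hA : ∀ i, (A i).IsSymm) (h : PrimalNondeg A X) {y : Fin m → ℝ}
    (hy : (∑ i, y i • A i) * X = 0) : y = 0 := by
  obtain ⟨r, M₁, M₂, -, -, -, hrange, hli⟩ := h
  obtain ⟨Z, hZ⟩ := exists_eq_mul_of_range_mulVecLin_le hrange.le
  set B := ∑ i, y i • A i with hB
  have hBM : B * M₁ = 0 := by rw [hZ, ← Matrix.mul_assoc, hy, Matrix.zero_mul]
  have hBsymm : Bᵀ = B := by
    rw [hB, transpose_sum]
    exact Finset.sum_congr rfl fun i _ => ((hA i).smul (y i)).eq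
  have hMB : M₁ᵀ * B = 0 := by rw [← hBsymm, ← transpose_mul, hBM, transpose_zero]
  have hblocks : ∑ i, y i • fromBlocks (M₁ᵀ * A i * M₁) (M₁ᵀ * A i * M₂) (M₂ᵀ * A i * M₁)
      (0 : Matrix (Fin (n - r)) (Fin (n - r)) ℝ) =
      fromBlocks (M₁ᵀ * B * M₁) (M₁ᵀ * B * M₂) (M₂ᵀ * (B * M₁)) 0 := by
    simp only [hB, Matrix.mul_sum, Matrix.sum_mul, Matrix.mul_smul, Matrix.smul_mul,
      Matrix.mul_assoc]
    ext (_ | _) (_ | _) <;> simp [Matrix.sum_apply]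
  rw [hBM, hMB, Matrix.zero_mul, Matrix.zero_mul, Matrix.mul_zero, fromBlocks_zero] at hblocks
  exact funext (Fintype.linearIndependent_iff.1 hli y hblocks)

theorem eq_zero_of_dualNondeg (h : DualNondeg A S) {D : Matrix (Fin n) (Fin n) ℝ} (hD : D.IsSymm)
    (hSD : S * D = 0) (hAD : ∀ i, (A i * D).trace = 0) : D = 0 := by
  obtain ⟨k, N, hN, hrange, hspan⟩ := h
  have hDrange : LinearMap.range D.mulVecLin ≤ LinearMap.range N.mulVecLin := by
    rw [hrange]
    rintro _ ⟨v, rfl⟩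
    rw [LinearMap.mem_ker, mulVecLin_apply, mulVecLin_apply, mulVec_mulVec, hSD, zero_mulVec]
  obtain ⟨Z, hZ⟩ := exists_eq_mul_of_range_mulVecLin_le hDrange
  have hND : N * (Nᵀ * D) = D := by
    rw [hZ, ← Matrix.mul_assoc Nᵀ, hN, Matrix.one_mul]
  have hDN : D * N * Nᵀ = D := by
    have := congrArg transpose hND
    rwa [transpose_mul, transpose_mul, transpose_transpose, hD.eq] at this
  set W := Nᵀ * D * N with hW
  have hNW : N * W * Nᵀ = D := by rw [hW, ← Matrix.mul_assoc, hND, hDN]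
  have hWsymm : W.IsSymm := by
    rw [IsSymm, hW, transpose_mul, transpose_mul, transpose_transpose, hD.eq, Matrix.mul_assoc]
  have hWorth : W ∈ LinearMap.ker (traceLinearMap (Fin k) ℝ ℝ ∘ₗ LinearMap.mulRight ℝ W) := by
    refine Submodule.span_le.2 ?_ (hspan W hWsymm)
    rintro _ ⟨i, rfl⟩
    change (Nᵀ * A i * N * W).trace = 0
    rw [← hAD i, ← hNW, Matrix.mul_assoc, Matrix.mul_assoc, trace_mul_comm, Matrix.mul_assoc]
  have hW0 : W = 0 := by
    have : (Wᴴ * W).trace = 0 := by rwa [conjTranspose_eq_transpose_of_trivial, hWsymm.eq]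
    exact trace_conjTranspose_mul_self_eq_zero_iff.1 this
  rw [← hNW, hW0, Matrix.mul_zero, Matrix.zero_mul]

theorem jNonsingular_of_nondeg (hA : ∀ i, (A i).IsSymm) (hX : X.PosSemidef) (hS : S.PosSemidef)
    (hXS : X * S = 0) (hW : (X + S).PosDef) (hP : PrimalNondeg A X) (hD : DualNondeg A S) :
    JNonsingular A X S := by
  intro DX DS Dy hDX hDS hprimal hdual hcompl
  have hDS_eq : DS = -∑ i, Dy i • A i := eq_neg_of_add_eq_zero_right hdual
  have horth : (DX * DS).trace = 0 := by
    rw [hDS_eq, trace_mul_comm, Matrix.neg_mul, trace_neg, Finset.sum_mul, trace_sum]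
    simp [hprimal]
  obtain ⟨hSDX, hXDS⟩ := mul_eq_zero_of_linearized_of_trace_eq_zero hX hS
    (isHermitian_iff_isSymm.2 hDX) (isHermitian_iff_isSymm.2 hDS) hXS hW hcompl horth
  have hDSX : DS * X = 0 :=
    mul_eq_zero_symm_of_isHermitian hX.isHermitian (isHermitian_iff_isSymm.2 hDS) hXDS
  have hDy : Dy = 0 := eq_zero_of_primalNondeg hA hP <| by
    rw [← neg_eq_zero, ← Matrix.neg_mul, ← hDS_eq, hDSX]
  exact ⟨eq_zero_of_dualNondeg hD hDX hSDX hprimal, hDy, by simp [hDS_eq, hDy]⟩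

end Nondegeneracy

section Complementary

variable {n m : ℕ} {C Cbar X S Z T : Matrix (Fin n) (Fin n) ℝ}
  {A : Fin m → Matrix (Fin n) (Fin n) ℝ} {b y z : Fin m → ℝ} {ε : ℝ}

/-- A primal-dual feasible triple at `ε` with `X * S = 0`, i.e. with vanishing duality gap. -/
structure IsComplementary (C Cbar : Matrix (Fin n) (Fin n) ℝ)
    (A : Fin m → Matrix (Fin n) (Fin n) ℝ) (b : Fin m → ℝ) (ε : ℝ) (X : Matrix (Fin n) (Fin n) ℝ)
    (y : Fin m → ℝ) (S : Matrix (Fin n) (Fin n) ℝ) : Prop where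
  primal : PrimalFeasible A b X
  dual : DualFeasible C Cbar A ε y S
  mul_eq_zero : X * S = 0

theorem trace_mul_eq_duality_gap (hX : PrimalFeasible A b X) (hS : DualFeasible C Cbar A ε y S) :
    (X * S).trace = ((C + ε • Cbar) * X).trace - ∑ i, b i * y i := by
  rw [← hS.2.1, Matrix.add_mul, trace_add, Finset.sum_mul, trace_sum, trace_mul_comm S X]
  simp [hX.2.1, mul_comm]

namespace IsComplementary

theorem of_trace_mul_nonpos (hX : PrimalFeasible A b X) (hS : DualFeasible C Cbar A ε y S)
    (h : (X * S).trace ≤ 0) : IsComplementary C Cbar A b ε X y S :=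
  ⟨hX, hS, posSemidef_mul_eq_zero_of_trace_mul_eq_zero hX.2.2 hS.2.2
    (h.antisymm (posSemidef_trace_mul_nonneg hX.2.2 hS.2.2))⟩

theorem of_mem_opt (h : IsComplementary C Cbar A b ε X y S) (hZ : Z ∈ PrimalOpt C Cbar A b ε)
    (hT : (z, T) ∈ DualOpt C Cbar A b ε) : IsComplementary C Cbar A b ε Z z T := by
  refine of_trace_mul_nonpos hZ.1 hT.1 ?_
  have hgap := trace_mul_eq_duality_gap h.primal h.dual
  rw [h.mul_eq_zero, trace_zero] at hgap
  rw [trace_mul_eq_duality_gap hZ.1 hT.1]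
  linarith [hZ.2 X h.primal, hT.2 y S h.dual]

theorem interchange (h : IsComplementary C Cbar A b ε X y S)
    (h' : IsComplementary C Cbar A b ε Z z T) : IsComplementary C Cbar A b ε X z T := by
  refine of_trace_mul_nonpos h.primal h'.dual ?_
  have hXS := trace_mul_eq_duality_gap h.primal h.dual
  have hZT := trace_mul_eq_duality_gap h'.primal h'.dual
  rw [h.mul_eq_zero, trace_zero] at hXS
  rw [h'.mul_eq_zero, trace_zero] at hZT
  have hZS := trace_mul_eq_duality_gap h'.primal h.dual
  have hnonneg : 0 ≤ (Z * S).trace := posSemidef_trace_mul_nonneg h'.primal.2.2 h.dual.2.2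
  rw [trace_mul_eq_duality_gap h.primal h'.dual]
  linarith

theorem mul_eq_zero_symm (h : IsComplementary C Cbar A b ε X y S) : S * X = 0 :=
  mul_eq_zero_symm_of_isHermitian h.primal.2.2.isHermitian h.dual.2.2.isHermitian h.mul_eq_zero

theorem eq_of_jNonsingular (h : IsComplementary C Cbar A b ε X y S)
    (h' : IsComplementary C Cbar A b ε Z z T) (hJ : JNonsingular A X S) : Z = X ∧ T = S := by
  have hXT := h.interchange h'
  have hZS := h'.interchange h
  obtain ⟨hX, -, -⟩ := hJ (Z - X) 0 0 (h'.primal.1.sub h.primal.1) isSymm_zero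
    (fun i => by rw [Matrix.mul_sub, trace_sub, h'.primal.2.1, h.primal.2.1, sub_self]) (by simp)
    (by simp [Matrix.sub_mul, Matrix.mul_sub, h.mul_eq_zero, h.mul_eq_zero_symm, hZS.mul_eq_zero,
      hZS.mul_eq_zero_symm])
  obtain ⟨-, -, hS⟩ := hJ 0 (T - S) (z - y) isSymm_zero (h'.dual.1.sub h.dual.1) (by simp)
    (by
      simp only [Pi.sub_apply, sub_smul, Finset.sum_sub_distrib]
      rw [sub_add_sub_comm, h'.dual.2.1, h.dual.2.1, sub_self])
    (by simp [Matrix.sub_mul, Matrix.mul_sub, h.mul_eq_zero, h.mul_eq_zero_symm, hXT.mul_eq_zero,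
      hXT.mul_eq_zero_symm])
  exact ⟨sub_eq_zero.1 hX, sub_eq_zero.1 hS⟩

theorem rank_add_rank_le (h : IsComplementary C Cbar A b ε X y S) : X.rank + S.rank ≤ n := by
  simpa using rank_add_rank_le_card_of_mul_eq_zero h.mul_eq_zero

end IsComplementary

end Complementary

section OptimalitySystem

variable {n m : ℕ} {C Cbar X S : symmMatrix (Fin n)} {A : Fin m → symmMatrix (Fin n)}
  {b y : Fin m → ℝ} {ε : ℝ}

theorem jNonsingular_iff_injective_optimalityJacobian :
    JNonsingular (fun i => (A i).1) X S ↔ Function.Injective (optimalityJacobian A X S) := by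
  rw [injective_iff_map_eq_zero]
  constructor
  · rintro hJ ⟨DX, Dy, DS⟩ hD
    simp only [optimalityJacobian_apply, Prod.mk_eq_zero] at hD
    obtain ⟨hprimal, hdual, hcompl⟩ := hD
    obtain ⟨hDX, hDy, hDS⟩ := hJ DX DS Dy DX.2 DS.2 (congrFun hprimal)
      (by simpa [Fintype.linearCombination_apply] using congrArg Subtype.val hdual)
      (by
        have : (X * DS + DS * X + (DX * S + S * DX) : Matrix (Fin n) (Fin n) ℝ) = 0 :=
          congrArg Subtype.val hcompl
        rw [← this]
        abel)
    rw [Submodule.coe_eq_zero.1 hDX, hDy, Submodule.coe_eq_zero.1 hDS, Prod.mk_zero_zero,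
      Prod.mk_zero_zero]
  · intro hJ DX DS Dy hDX hDS hprimal hdual hcompl
    lift DX to symmMatrix (Fin n) using hDX
    lift DS to symmMatrix (Fin n) using hDS
    have hD := hJ (DX, Dy, DS) <| by
      refine Prod.ext (funext hprimal) (Prod.ext (Subtype.ext ?_) (Subtype.ext ?_))
      · simpa [optimalityJacobian_apply, Fintype.linearCombination_apply] using hdual
      · simpa [optimalityJacobian_apply, coe_anticommutator, ← add_assoc, add_comm,
          add_left_comm] using hcompl
    simpa using hD

theorem exists_isComplementary_of_mem_primalOpt {X₀ X : Matrix (Fin n) (Fin n) ℝ}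
    (hA : Function.Surjective (constraintMap A)) (hX₀ : PrimalFeasible (fun i => (A i).1) b X₀)
    (hpos : X₀.PosDef) (hX : X ∈ PrimalOpt C.1 Cbar (fun i => (A i).1) b ε) :
    ∃ y S, IsComplementary C.1 Cbar (fun i => (A i).1) b ε X y S := by
  lift X₀ to symmMatrix (Fin n) using hX₀.1
  have hb : constraintMap A X₀ = b := funext hX₀.2.1
  obtain ⟨y, hS, hle⟩ := exists_posSemidef_sub_linearCombination (C := C + ε • Cbar) hA hpos
    fun M hM hAM => hX.2 M ⟨M.2, fun i => congrFun (hAM.trans hb) i, hM.posSemidef⟩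
  rw [hb] at hle
  have hdual : DualFeasible C.1 Cbar (fun i => (A i).1) ε y
      (C + ε • Cbar - Fintype.linearCombination ℝ A y : symmMatrix (Fin n)) :=
    ⟨Subtype.prop _, by simp [Fintype.linearCombination_apply], hS⟩
  refine ⟨y, _, .of_trace_mul_nonpos hX.1 hdual ?_⟩
  rw [trace_mul_eq_duality_gap hX.1 hdual]
  exact sub_nonpos.2 hle

theorem optimalityMap_eq_of_isComplementary
    (h : IsComplementary C.1 Cbar (fun i => (A i).1) b ε X y S) :
    optimalityMap A (X, y, S) = (b, C + ε • Cbar, 0) := by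
  refine Prod.ext (funext h.primal.2.1) (Prod.ext (Subtype.ext ?_) (Subtype.ext ?_))
  · simpa [optimalityMap, Fintype.linearCombination_apply] using h.dual.2.1
  · simp [optimalityMap, coe_anticommutator, h.mul_eq_zero, h.mul_eq_zero_symm]

theorem isComplementary_of_optimalityMap_eq
    (h : optimalityMap A (X, y, S) = (b, C + ε • Cbar, 0))
    (hpos : (X + S : Matrix (Fin n) (Fin n) ℝ).PosDef) :
    IsComplementary C.1 Cbar (fun i => (A i).1) b ε X y S := by
  obtain ⟨hprimal, hdual_compl⟩ := Prod.mk.inj h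
  obtain ⟨hdual, hcompl⟩ := Prod.mk.inj hdual_compl
  have hXS : (X * S + S * X : Matrix (Fin n) (Fin n) ℝ) = 0 := congrArg Subtype.val hcompl
  have hX := posSemidef_of_mul_add_mul_eq_zero (isHermitian_iff_isSymm.2 X.2) hXS hpos
  have hS := posSemidef_of_mul_add_mul_eq_zero (isHermitian_iff_isSymm.2 S.2)
    (by rwa [add_comm]) (by rwa [add_comm])
  exact ⟨⟨X.2, congrFun hprimal, hX⟩,
    ⟨S.2, by simpa [Fintype.linearCombination_apply] using congrArg Subtype.val hdual, hS⟩,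
    posSemidef_mul_eq_zero_of_sylvester hX hX hXS⟩

open Filter Topology

theorem eventually_exists_isComplementary
    (h : IsComplementary C.1 Cbar (fun i => (A i).1) b ε X y S)
    (hJ : Function.Injective (optimalityJacobian A X S))
    {P : symmMatrix (Fin n) × (Fin m → ℝ) × symmMatrix (Fin n) → Prop}
    (hP : ∀ᶠ q in 𝓝 (X, y, S), P q) :
    ∀ᶠ ε' in 𝓝 ε, ∃ q, P q ∧ IsComplementary C.1 Cbar
      (fun i => (A i).1) b ε' q.1 q.2.1 q.2.2 := by
  have hpos : ∀ᶠ q : symmMatrix (Fin n) × (Fin m → ℝ) × symmMatrix (Fin n) in 𝓝 (X, y, S),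
      (q.1 + q.2.2 : Matrix (Fin n) (Fin n) ℝ).PosDef :=
    (isOpen_setOf_posDef.preimage (continuous_fst.add continuous_snd.snd)).mem_nhds <|
      posDef_add_of_injective_optimalityJacobian h.primal.2.2 h.dual.2.2 hJ
  have himage : optimalityMap A '' {q | P q ∧ (q.1 + q.2.2 : Matrix (Fin n) (Fin n) ℝ).PosDef} ∈
      𝓝 (b, C + ε • Cbar, 0) := by
    rw [← optimalityMap_eq_of_isComplementary h, ← map_optimalityMap_nhds (q := (X, y, S)) hJ]
    exact image_mem_map (hP.and hpos)
  have hcont : Continuous fun ε' : ℝ => (b, C + ε' • Cbar, (0 : symmMatrix (Fin n))) := by fun_prop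
  filter_upwards [hcont.continuousAt himage]
  rintro ε' ⟨q, ⟨hPq, hposq⟩, hq⟩
  exact ⟨q, hPq, isComplementary_of_optimalityMap_eq hq hposq⟩

theorem eventually_exists_isComplementary_rank_eq
    (h : IsComplementary C.1 Cbar (fun i => (A i).1) b ε X y S)
    (hJ : JNonsingular (fun i => (A i).1) X S) :
    ∀ᶠ ε' in 𝓝 ε, ∃ X' y' S', IsComplementary C.1 Cbar
      (fun i => (A i).1) b ε' X' y' S' ∧ JNonsingular (fun i => (A i).1) X' S' ∧
      X'.rank = X.1.rank ∧ S'.rank = S.1.rank := by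
  have hinj := jNonsingular_iff_injective_optimalityJacobian.1 hJ
  have hrank : n ≤ X.1.rank + S.1.rank := by
    have := matrix_rank_add_le X.1 S.1
    rwa [rank_of_isUnit _ (posDef_add_of_injective_optimalityJacobian h.primal.2.2 h.dual.2.2
      hinj).isUnit, Fintype.card_fin] at this
  have hX : ∀ᶠ q : symmMatrix (Fin n) × (Fin m → ℝ) × symmMatrix (Fin n) in 𝓝 (X, y, S),
      X.1.rank ≤ q.1.1.rank :=
    ((isOpen_setOf_le_matrix_rank _).preimage
      (continuous_subtype_val.comp continuous_fst)).mem_nhds (le_refl X.1.rank)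
  have hS : ∀ᶠ q : symmMatrix (Fin n) × (Fin m → ℝ) × symmMatrix (Fin n) in 𝓝 (X, y, S),
      S.1.rank ≤ q.2.2.1.rank :=
    ((isOpen_setOf_le_matrix_rank _).preimage
      (continuous_subtype_val.comp continuous_snd.snd)).mem_nhds (le_refl S.1.rank)
  have hinj_near := eventually_injective_optimalityJacobian (q := (X, y, S)) hinj
  filter_upwards [eventually_exists_isComplementary h hinj (hinj_near.and (hX.and hS))]
  rintro ε' ⟨q, ⟨hJq, hXq, hSq⟩, hq⟩
  have := hq.rank_add_rank_le
  exact ⟨_, _, _, hq, jNonsingular_iff_injective_optimalityJacobian.2 hJq, by lia, by lia⟩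

end OptimalitySystem

section Stability

open Filter Topology

variable {n m : ℕ} {C Cbar X S : Matrix (Fin n) (Fin n) ℝ} {A : Fin m → Matrix (Fin n) (Fin n) ℝ}
  {b y : Fin m → ℝ} {ε ε' : ℝ}

theorem dimsMatch_of_isComplementary {X' S' : Matrix (Fin n) (Fin n) ℝ} {y' : Fin m → ℝ}
    (h : IsComplementary C Cbar A b ε X y S) (hJ : JNonsingular A X S)
    (h' : IsComplementary C Cbar A b ε' X' y' S') (hJ' : JNonsingular A X' S')
    (hX : X'.rank = X.rank) (hS : S'.rank = S.rank) : DimsMatch C Cbar A b ε' ε := by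
  intro Z' z' T' Z z T hmax' hmax
  obtain ⟨rfl, rfl⟩ := h.eq_of_jNonsingular (h.of_mem_opt (intrinsicInterior_subset hmax.1)
    (intrinsicInterior_subset hmax.2)) hJ
  obtain ⟨rfl, rfl⟩ := h'.eq_of_jNonsingular (h'.of_mem_opt (intrinsicInterior_subset hmax'.1)
    (intrinsicInterior_subset hmax'.2)) hJ'
  exact ⟨hX, hS⟩

theorem eventually_dimsMatch_of_jNonsingular (hC : C.IsSymm) (hCbar : Cbar.IsSymm)
    (hA : ∀ i, (A i).IsSymm) (h : IsComplementary C Cbar A b ε X y S) (hJ : JNonsingular A X S) :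
    ∀ᶠ ε' in 𝓝 ε, DimsMatch C Cbar A b ε' ε := by
  lift C to symmMatrix (Fin n) using hC
  lift Cbar to symmMatrix (Fin n) using hCbar
  lift A to Fin m → symmMatrix (Fin n) using hA
  lift X to symmMatrix (Fin n) using h.primal.1
  lift S to symmMatrix (Fin n) using h.dual.1
  filter_upwards [eventually_exists_isComplementary_rank_eq h hJ]
  rintro ε' ⟨X', y', S', h', hJ', hX, hS⟩
  exact dimsMatch_of_isComplementary h hJ h' hJ' hX hS

theorem isComplementary_of_mem_opt (hC : C.IsSymm) (hCbar : Cbar.IsSymm)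
    (hA : ∀ i, (A i).IsSymm) (hli : LinearIndependent ℝ A)
    (hslater : ∃ X₀, PrimalFeasible A b X₀ ∧ X₀.PosDef)
    (hX : X ∈ PrimalOpt C Cbar A b ε) (hS : (y, S) ∈ DualOpt C Cbar A b ε) :
    IsComplementary C Cbar A b ε X y S := by
  lift C to symmMatrix (Fin n) using hC
  lift Cbar to symmMatrix (Fin n) using hCbar
  lift A to Fin m → symmMatrix (Fin n) using hA
  obtain ⟨X₀, hX₀, hpos⟩ := hslater
  obtain ⟨y', S', h⟩ := exists_isComplementary_of_mem_primalOpt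
    (constraintMap_surjective_of_linearIndependent
      (.of_comp (symmMatrix (Fin n)).subtype hli)) hX₀ hpos hX
  exact h.of_mem_opt hX hS

theorem linearIndependent_of_jNonsingular (hJ : JNonsingular A X S) : LinearIndependent ℝ A :=
  Fintype.linearIndependent_iff.2 fun y hy => congrFun
    (hJ 0 0 y isSymm_zero isSymm_zero (by simp) (by simpa using hy) (by simp)).2.1

theorem linearIndependent_of_primalNondeg (hA : ∀ i, (A i).IsSymm) (h : PrimalNondeg A X) :
    LinearIndependent ℝ A :=
  Fintype.linearIndependent_iff.2 fun _ hy => congrFun <|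
    eq_zero_of_primalNondeg hA h (by rw [hy, Matrix.zero_mul])

theorem IsTransitionPoint.frequently_not_dimsMatch (h : IsTransitionPoint C Cbar A b ε) :
    ∃ᶠ ε' in 𝓝 ε, ¬ DimsMatch C Cbar A b ε' ε := by
  rw [(nhds_basis_Ioo_pos ε).frequently_iff]
  intro ξ hξ
  obtain ⟨ε', hε', hdims⟩ := h.2.2 ξ hξ
  exact ⟨ε', hε'.1, hdims⟩

end Stability

open Topology in
theorem stmt8_general {n m : ℕ} {C Cbar : Matrix (Fin n) (Fin n) ℝ}
    {A : Fin m → Matrix (Fin n) (Fin n) ℝ} {b : Fin m → ℝ} (hC : C.IsSymm) (hCbar : Cbar.IsSymm)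
    (hA : ∀ i, (A i).IsSymm) (hslater : ∃ X₀, PrimalFeasible A b X₀ ∧ X₀.PosDef) {εbar : ℝ}
    (hdims : ∃ᶠ ε in 𝓝 εbar, ¬ DimsMatch C Cbar A b ε εbar) {Xs Ss : Matrix (Fin n) (Fin n) ℝ}
    {ys : Fin m → ℝ} (hX : Xs ∈ PrimalOpt C Cbar A b εbar)
    (hS : (ys, Ss) ∈ DualOpt C Cbar A b εbar) :
    ¬ ((Xs + Ss).PosDef ∧ PrimalNondeg A Xs ∧ DualNondeg A Ss) ∧ ¬ JNonsingular A Xs Ss := by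
  have hcompl (hli : LinearIndependent ℝ A) : IsComplementary C Cbar A b εbar Xs ys Ss :=
    isComplementary_of_mem_opt hC hCbar hA hli hslater hX hS
  have hJ : ¬ JNonsingular A Xs Ss := fun hJ => hdims <| by
    simpa only [not_not] using eventually_dimsMatch_of_jNonsingular hC hCbar hA
      (hcompl (linearIndependent_of_jNonsingular hJ)) hJ
  refine ⟨fun ⟨hpos, hP, hD⟩ => hJ ?_, hJ⟩
  exact jNonsingular_of_nondeg hA hX.1.2.2 hS.1.2.2
    (hcompl (linearIndependent_of_primalNondeg hA hP)).mul_eq_zero hpos hP hD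

/-- at a transition point, strict complementarity, primal nondegeneracy or dual
nondegeneracy fails; equivalently the Jacobian is singular at any maximally complementary
solution. -/
theorem stmt8 {n m : ℕ} (C Cbar : Matrix (Fin n) (Fin n) ℝ)
    (A : Fin m → Matrix (Fin n) (Fin n) ℝ) (b : Fin m → ℝ)
    (hSA : StandingAssumptions C Cbar A b)
    (εbar : ℝ) (htr : IsTransitionPoint C Cbar A b εbar)
    (Xs Ss : Matrix (Fin n) (Fin n) ℝ) (ys : Fin m → ℝ)
    (hmc : MaxComp C Cbar A b εbar Xs ys Ss) :
    ¬ ((Xs + Ss).PosDef ∧ PrimalNondeg A Xs ∧ DualNondeg A Ss) ∧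
      ¬ JNonsingular A Xs Ss := by
  obtain ⟨hC, hCbar, hA, -, X₀, -, -, hX₀, hpos, -, -⟩ := hSA
  exact stmt8_general hC hCbar hA ⟨X₀, hX₀, hpos⟩ htr.frequently_not_dimsMatch
    (intrinsicInterior_subset hmc.1) (intrinsicInterior_subset hmc.2)
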